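/- If a type-2 event occurs at time τ and the idle period immediately preceding τ has length at least s, then ζ(t) = s for every t between τ and the next loss of the nominal trajectory, and the first loss occurring after τ is a type-1 event. Consequently N_ℓ ≤ N₁, where N_ℓ is the number of lossy busy periods whose preceding idle period has length at least s and N₁ is the total number of type-1 events during [0, t_f]. -/

import Mathlib

/-! A single-server FCFS queue with deterministic service time `s`, buffer size `k`
(counting the job in service), driven by a finite list `as` of arrival times.
The state is the list of (arrival time, departure time) pairs of admitted jobs. -/

/-- Process one arrival `a`: it is admitted iff the number of jobs still in the
system just before `a` is less than `k`; its service starts when the server frees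
(the departure time of the previously admitted job) or at `a`, and lasts `s`. -/
noncomputable def qstep (s : ℝ) (k : ℕ) (jobs : List (ℝ × ℝ)) (a : ℝ) :
    List (ℝ × ℝ) :=
  if (jobs.filter (fun p => decide (a ≤ p.2))).length < k then
    jobs ++ [(a, max a (((jobs.getLast?).map Prod.snd).getD a) + s)]
  else jobs

/-- The admitted jobs (arrival, departure) after processing all arrivals. -/
noncomputable def qsim (s : ℝ) (k : ℕ) (as : List ℝ) : List (ℝ × ℝ) :=
  as.foldl (qstep s k) []

/-- The admitted jobs arrived strictly before time `t`. -/
noncomputable def jobsBefore (s : ℝ) (k : ℕ) (as : List ℝ) (t : ℝ) :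
    List (ℝ × ℝ) :=
  ((as.filter (fun b => decide (b < t)))).foldl (qstep s k) []

/-- `x(k,t)`: the number of jobs in the system at time `t` (right-continuous). -/
noncomputable def xq (s : ℝ) (k : ℕ) (as : List ℝ) (t : ℝ) : ℕ :=
  ((qsim s k as).filter (fun p => decide (p.1 ≤ t) && decide (t < p.2))).length

/-- `x(k,t⁻)`: the number of jobs in the system just before time `t`. -/
noncomputable def xqMinus (s : ℝ) (k : ℕ) (as : List ℝ) (t : ℝ) : ℕ :=
  ((qsim s k as).filter (fun p => decide (p.1 < t) && decide (t ≤ p.2))).length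

/-- `n(k)`: the number of jobs lost during the horizon. -/
noncomputable def nLost (s : ℝ) (k : ℕ) (as : List ℝ) : ℕ :=
  as.length - (qsim s k as).length

/-- A loss (of the trajectory with buffer size `k`) occurs at time `a`:
`a` is an arrival time and `x(k,a⁻) = k`. -/
noncomputable def isLoss (s : ℝ) (k : ℕ) (as : List ℝ) (a : ℝ) : Bool :=
  decide (a ∈ as) &&
    decide (((jobsBefore s k as a).filter (fun p => decide (a ≤ p.2))).length = k)

/-- The end time of the busy period of `x(k,·)` containing (or next following) `t`:
the first time `u ≥ t` at which the system is empty. -/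
noncomputable def busyEnd (s : ℝ) (k : ℕ) (as : List ℝ) (t : ℝ) : ℝ :=
  sInf {u : ℝ | t ≤ u ∧ xq s k as u = 0}

/-- One step of the state machine of Definition 1, acting on `(jobs, ψ, ζ)`.
At a type-2 event (arrival to an empty system), `ψ := 0` and
`ζ := min (t_b - τ_e + ζ) s`, with `τ_e` the end of the preceding busy period.
At a type-1 event (a loss with `ψ = 0` and `ζ > s - (t_a - t_0) ≥ 0`, where `t_0`
is the service-start time of the job in service), `ψ := 1` and `ζ := 0`. -/
noncomputable def pzstep (s : ℝ) (k : ℕ) (st : List (ℝ × ℝ) × Bool × ℝ) (a : ℝ) :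
    List (ℝ × ℝ) × Bool × ℝ :=
  let present := st.1.filter (fun p => decide (a ≤ p.2))
  if present.length = 0 then
    -- type-2 event
    (qstep s k st.1 a, false,
      min (a - (((st.1.getLast?).map Prod.snd).getD 0) + st.2.2) s)
  else if present.length < k then
    (qstep s k st.1 a, st.2.1, st.2.2)
  else
    -- a loss: possibly a type-1 event
    let t0 := ((present.head?).map (fun p => p.2 - s)).getD a
    if st.2.1 = false ∧ s - (a - t0) < st.2.2 ∧ 0 ≤ s - (a - t0) then
      (qstep s k st.1 a, true, 0)
    else
      (qstep s k st.1 a, st.2.1, st.2.2)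

/-- The state `(jobs, ψ, ζ)` just before time `t` (initialized `ψ = 0`, `ζ = s`). -/
noncomputable def pzBefore (s : ℝ) (k : ℕ) (as : List ℝ) (t : ℝ) :
    List (ℝ × ℝ) × Bool × ℝ :=
  ((as.filter (fun b => decide (b < t)))).foldl (pzstep s k) ([], false, s)

/-- `ζ(t)`: the value of the auxiliary variable `ζ` at time `t`. -/
noncomputable def zetaAt (s : ℝ) (k : ℕ) (as : List ℝ) (t : ℝ) : ℝ :=
  (((as.filter (fun b => decide (b ≤ t)))).foldl (pzstep s k) ([], false, s)).2.2

/-- A type-1 event occurs at time `a`: `a` is an arrival time, `x(k,a⁻) = k`,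
`ψ = 0`, and `ζ > s - (a - t_0) ≥ 0` where `t_0` is the service-start time of the
job in service at time `a`. -/
noncomputable def isType1 (s : ℝ) (k : ℕ) (as : List ℝ) (a : ℝ) : Bool :=
  let st := pzBefore s k as a
  let present := st.1.filter (fun p => decide (a ≤ p.2))
  let t0 := ((present.head?).map (fun p => p.2 - s)).getD a
  decide (a ∈ as) && decide (present.length = k) && (!st.2.1) &&
    decide (s - (a - t0) < st.2.2) && decide (0 ≤ s - (a - t0))

/-- A type-2 event occurs at time `a`: `a` is an arrival time and `x(k,a⁻) = 0`. -/
noncomputable def isType2 (s : ℝ) (k : ℕ) (as : List ℝ) (a : ℝ) : Bool :=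
  decide (a ∈ as) &&
    decide (((jobsBefore s k as a).filter (fun p => decide (a ≤ p.2))).length = 0)

/-- The departure time ending the busy period preceding `t` (i.e. the start of the
idle period preceding `t`); `0` if no job departed before `t`. -/
noncomputable def prevDep (s : ℝ) (k : ℕ) (as : List ℝ) (t : ℝ) : ℝ :=
  ((((jobsBefore s k as t)).getLast?).map Prod.snd).getD 0

/-- `b` is the start of a lossy busy period of `x(k,·)`: a type-2 event such that
some loss occurs during the busy period `[b, busyEnd b)` begun at `b`. -/
noncomputable def startsLossyBP (s : ℝ) (k : ℕ) (as : List ℝ) (b : ℝ) : Bool :=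
  isType2 s k as b &&
    as.any (fun a =>
      isLoss s k as a && decide (b ≤ a) && decide (a < busyEnd s k as b))

/-- `N₁`: the number of type-1 events. -/
noncomputable def numType1 (s : ℝ) (k : ℕ) (as : List ℝ) : ℕ :=
  (as.filter (isType1 s k as)).length

/-- `N`: the number of lossy busy periods. -/
noncomputable def numLossyBP (s : ℝ) (k : ℕ) (as : List ℝ) : ℕ :=
  (as.filter (startsLossyBP s k as)).length

/-- `N_s`: the number of lossy busy periods whose preceding idle period is shorter
than `s`. -/
noncomputable def numLossyBPShort (s : ℝ) (k : ℕ) (as : List ℝ) : ℕ :=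
  (as.filter (fun b =>
    startsLossyBP s k as b && decide (b - prevDep s k as b < s))).length

/-- `N_ℓ`: the number of lossy busy periods whose preceding idle period has length
at least `s`. -/
noncomputable def numLossyBPLong (s : ℝ) (k : ℕ) (as : List ℝ) : ℕ :=
  (as.filter (fun b =>
    startsLossyBP s k as b && decide (s ≤ b - prevDep s k as b))).length

/-- In a strictly increasing list, the entries preceding `c` are those smaller than `c`. -/
theorem filter_lt_of_pairwise_append_cons {l₁ l₂ : List ℝ} {c : ℝ}
    (h : (l₁ ++ c :: l₂).Pairwise (· < ·)) :
    (l₁ ++ c :: l₂).filter (fun b => decide (b < c)) = l₁ := by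
  rw [List.pairwise_append, List.pairwise_cons] at h
  obtain ⟨-, ⟨h₂, -⟩, h₁⟩ := h
  have e₁ : l₁.filter (fun b => decide (b < c)) = l₁ :=
    List.filter_eq_self.2 fun b hb => by simpa using h₁ b hb c (by simp)
  have e₂ : l₂.filter (fun b => decide (b < c)) = [] :=
    List.filter_eq_nil_iff.2 fun b hb => by simpa using (h₂ b hb).le
  simp [e₁, e₂]

/-- A strictly increasing list splits into its entries below `t` and those from `t` on. -/
theorem filter_lt_append_filter_ge {l : List ℝ} (h : l.Pairwise (· < ·)) (t : ℝ) :
    l.filter (fun b => decide (b < t)) ++ l.filter (fun b => decide (t ≤ b)) = l := by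
  induction l with
  | nil => rfl
  | cons x l ih =>
    rw [List.pairwise_cons] at h
    by_cases hx : x < t
    · simp [hx, not_le.2 hx, ih h.2]
    · have e₁ : l.filter (fun b => decide (b < t)) = [] :=
        List.filter_eq_nil_iff.2 fun b hb => by
          simpa using (not_lt.1 hx).trans (h.1 b hb).le
      have e₂ : l.filter (fun b => decide (t ≤ b)) = l :=
        List.filter_eq_self.2 fun b hb => by
          simpa using (not_lt.1 hx).trans (h.1 b hb).le
      simp [hx, not_lt.1 hx, e₁, e₂]

theorem filter_le_isPrefix {l : List ℝ} (h : l.Pairwise (· < ·)) (t : ℝ) :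
    l.filter (fun b => decide (b ≤ t)) <+: l := by
  induction l with
  | nil => simp
  | cons x l ih =>
    rw [List.pairwise_cons] at h
    by_cases hx : x ≤ t
    · simpa [hx] using ih h.2
    · have e₁ : l.filter (fun b => decide (b ≤ t)) = [] :=
        List.filter_eq_nil_iff.2 fun b hb => by
          simpa using (not_le.1 hx).trans (h.1 b hb)
      simp [hx, e₁]

theorem pzstep_fst (s : ℝ) (k : ℕ) (st : List (ℝ × ℝ) × Bool × ℝ) (a : ℝ) :
    (pzstep s k st a).1 = qstep s k st.1 a := by
  unfold pzstep
  dsimp only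
  split_ifs <;> rfl

/-- The job component of the state machine is the queue itself. -/
theorem foldl_pzstep_fst (s : ℝ) (k : ℕ) (l : List ℝ) (st : List (ℝ × ℝ) × Bool × ℝ) :
    (l.foldl (pzstep s k) st).1 = l.foldl (qstep s k) st.1 := by
  induction l generalizing st with
  | nil => rfl
  | cons a l ih => rw [List.foldl_cons, List.foldl_cons, ih, pzstep_fst]

/-- Admitted jobs are old jobs or have arrived in the processed list. -/
theorem mem_foldl_qstep {s : ℝ} {k : ℕ} {l : List ℝ} {J : List (ℝ × ℝ)} {p : ℝ × ℝ}
    (h : p ∈ l.foldl (qstep s k) J) : p ∈ J ∨ p.1 ∈ l := by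
  induction l generalizing J with
  | nil => exact Or.inl h
  | cons a l ih =>
    rcases ih h with h | h
    · unfold qstep at h
      split_ifs at h
      · rcases List.mem_append.1 h with h | h
        · exact Or.inl h
        · rw [List.mem_singleton] at h
          exact Or.inr (by simp [h])
      · exact Or.inl h
    · exact Or.inr (List.mem_cons_of_mem _ h)

/-- The service of the first job still present at `a` has started before `a`. -/
theorem head_present_start_lt {s : ℝ} {k : ℕ} {l : List ℝ} {a : ℝ}
    (hl : ∀ b ∈ l, b < a) {p : ℝ × ℝ}
    (hp : ((l.foldl (qstep s k) []).filter (fun p => decide (a ≤ p.2))).head? = some p) :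
    p.2 - s < a := by
  induction l using List.reverseRecOn with
  | nil => simp at hp
  | append_singleton l c ih =>
    have ih' := ih fun b hb => hl b (by simp [hb])
    have hc : c < a := hl c (by simp)
    rw [List.foldl_append, List.foldl_cons, List.foldl_nil] at hp
    generalize l.foldl (qstep s k) [] = J at hp ih'
    unfold qstep at hp
    split_ifs at hp
    · rw [List.filter_append, List.head?_append] at hp
      cases hJ : (J.filter (fun p => decide (a ≤ p.2))).head? with
      | some q =>
        rw [hJ] at hp
        exact ih' (by simpa [hJ] using hp)
      | none =>
        have hnil := List.filter_eq_nil_iff.1 (List.head?_eq_none_iff.1 hJ)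
        rw [hJ, Option.none_or] at hp
        have hmem := List.mem_of_mem_filter (List.mem_of_mem_head? hp)
        rw [List.mem_singleton] at hmem
        subst hmem
        simp only [add_sub_cancel_right, max_lt_iff]
        refine ⟨hc, ?_⟩
        cases hlast : J.getLast? with
        | none => simpa using hc
        | some q => simpa using hnil q (List.mem_of_getLast? hlast)
    · exact ih' hp

/-- The number of jobs present never exceeds the buffer size. -/
theorem length_present_le {s : ℝ} {k : ℕ} {l : List ℝ} (hsort : l.Pairwise (· < ·)) {a : ℝ}
    (hl : ∀ b ∈ l, b < a) :
    ((l.foldl (qstep s k) []).filter (fun p => decide (a ≤ p.2))).length ≤ k := by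
  induction l using List.reverseRecOn generalizing a with
  | nil => simp
  | append_singleton l c ih =>
    rw [List.pairwise_append] at hsort
    have hc : c < a := hl c (by simp)
    have ih' := @ih hsort.1 a fun b hb => hl b (by simp [hb])
    rw [List.foldl_append, List.foldl_cons, List.foldl_nil]
    generalize l.foldl (qstep s k) [] = J at ih'
    unfold qstep
    split_ifs with h
    · have hmono : (J.filter (fun p => decide (a ≤ p.2))).length ≤
          (J.filter (fun p => decide (c ≤ p.2))).length :=
        (List.monotone_filter_right J fun p hp => by
          simp only [decide_eq_true_eq] at hp ⊢
          exact hc.le.trans hp).length_le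
      rw [List.filter_append, List.length_append]
      have := List.length_filter_le (fun p : ℝ × ℝ => decide (a ≤ p.2))
        [(c, max c ((J.getLast?.map Prod.snd).getD c) + s)]
      simp only [List.length_singleton] at this
      omega
    · exact ih'

/-- If the system is empty just before `a > 0`, then the last departure precedes `a`. -/
theorem lastDep_lt_of_present_nil {J : List (ℝ × ℝ)} {a : ℝ} (ha : 0 < a)
    (h : (J.filter (fun p => decide (a ≤ p.2))).length = 0) :
    (J.getLast?.map Prod.snd).getD 0 < a := by
  have hnil := List.filter_eq_nil_iff.1 (List.length_eq_zero_iff.1 h)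
  cases hlast : J.getLast? with
  | none => simpa using ha
  | some q => simpa using hnil q (List.mem_of_getLast? hlast)

theorem zeta_nonneg {s : ℝ} {k : ℕ} (hs : 0 < s) {l : List ℝ} (hl : ∀ b ∈ l, 0 < b) :
    0 ≤ (l.foldl (pzstep s k) ([], false, s)).2.2 := by
  induction l using List.reverseRecOn with
  | nil => exact hs.le
  | append_singleton l c ih =>
    have ih' := ih fun b hb => hl b (by simp [hb])
    rw [List.foldl_append, List.foldl_cons, List.foldl_nil]
    generalize l.foldl (pzstep s k) ([], false, s) = st at ih'
    unfold pzstep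
    dsimp only
    split_ifs with h
    · have := lastDep_lt_of_present_nil (hl c (by simp)) h
      exact le_min (by linarith) hs.le
    all_goals first | exact ih' | exact le_rfl

/-- After a type-2 event ending an idle period of length at least `s`, the state
machine stays at `ψ = 0`, `ζ = s` as long as no loss occurs. -/
theorem state_of_long_idle {s : ℝ} {k : ℕ} {as : List ℝ} (hs : 0 < s)
    (hinc : as.Pairwise (· < ·)) (hpos : ∀ a ∈ as, 0 < a)
    {τ : ℝ} (h2 : isType2 s k as τ = true) (hidle : s ≤ τ - prevDep s k as τ)
    {l : List ℝ} (hl : l <+: as) (hτ : τ ∈ l)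
    (hloss : ∀ a ∈ l, τ < a → ¬ isLoss s k as a = true) :
    (l.foldl (pzstep s k) ([], false, s)).2 = (false, s) := by
  induction l using List.reverseRecOn with
  | nil => simp at hτ
  | append_singleton l c ih =>
    obtain ⟨r, hr⟩ := hl
    rw [List.append_assoc, List.singleton_append] at hr
    have hc : c ∈ as := by simp [← hr]
    have hsort : (l ++ c :: r).Pairwise (· < ·) := hr ▸ hinc
    have hbefore : jobsBefore s k as c = l.foldl (qstep s k) [] := by
      unfold jobsBefore
      rw [← hr, filter_lt_of_pairwise_append_cons hsort]
    have hfst := foldl_pzstep_fst s k l ([], false, s)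
    rw [List.pairwise_append] at hsort
    have hlt : ∀ b ∈ l, b < c := fun b hb => hsort.2.2 b hb c (by simp)
    have hle := length_present_le (s := s) (k := k) hsort.1 hlt
    have hnonneg := zeta_nonneg (k := k) hs
      (l := l) fun b hb => hpos b (by simp [← hr, hb])
    rw [List.foldl_append, List.foldl_cons, List.foldl_nil]
    rw [← hbefore] at hfst hle
    by_cases hcτ : τ = c
    · subst hcτ
      simp only [isType2, Bool.and_eq_true, decide_eq_true_eq] at h2
      unfold prevDep at hidle
      simp only [pzstep, hfst, h2.2, if_true]
      rw [min_eq_right (by linarith)]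
    · have hτl : τ ∈ l := by simpa [hcτ] using hτ
      have ih' := ih ⟨c :: r, hr⟩ hτl fun a ha => hloss a (by simp [ha])
      have hne := hloss c (by simp) (hlt τ hτl)
      simp only [isLoss, Bool.and_eq_true, decide_eq_true_eq, hc, true_and] at hne
      have hk := lt_of_le_of_ne hle hne
      simp only [pzstep, hfst, ih', hk, if_true]
      split_ifs with h
      · have := lastDep_lt_of_present_nil (hpos c hc) h
        rw [min_eq_right (by linarith)]
      · rfl

/-- The first loss after a type-2 event ending a long idle period is a type-1 event. -/
theorem isType1_of_first_loss {s : ℝ} {k : ℕ} {as : List ℝ} (hs : 0 < s) (hk : 1 ≤ k)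
    (hinc : as.Pairwise (· < ·)) (hpos : ∀ a ∈ as, 0 < a)
    {τ : ℝ} (h2 : isType2 s k as τ = true) (hidle : s ≤ τ - prevDep s k as τ)
    {a : ℝ} (hloss : isLoss s k as a = true) (hτa : τ < a)
    (hfirst : ∀ a' ∈ as, isLoss s k as a' = true → τ < a' → a ≤ a') :
    isType1 s k as a = true := by
  have hτ : τ ∈ as := by
    simp only [isType2, Bool.and_eq_true, decide_eq_true_eq] at h2
    exact h2.1
  have hstate : (pzBefore s k as a).2 = (false, s) := by
    refine state_of_long_idle hs hinc hpos h2 hidle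
      ⟨_, filter_lt_append_filter_ge hinc a⟩ (by simp [hτ, hτa]) fun b hb hτb hlb => ?_
    simp only [List.mem_filter, decide_eq_true_eq] at hb
    exact absurd (hfirst b hb.1 hlb hτb) (not_le.2 hb.2)
  have hfst : (pzBefore s k as a).1 = jobsBefore s k as a := foldl_pzstep_fst ..
  simp only [isLoss, Bool.and_eq_true, decide_eq_true_eq] at hloss
  obtain ⟨p, hp⟩ : ∃ p, ((jobsBefore s k as a).filter
      (fun p => decide (a ≤ p.2))).head? = some p := by
    cases h : (jobsBefore s k as a).filter (fun p => decide (a ≤ p.2)) with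
    | nil => simp [h] at hloss; omega
    | cons p _ => exact ⟨p, rfl⟩
  have hstart : p.2 - s < a := head_present_start_lt (by simp) hp
  have hpresent : a ≤ p.2 := by
    simpa using (List.mem_filter.1 (List.mem_of_mem_head? hp)).2
  simp only [isType1, hfst, hstate, hp, hloss, Option.map_some, Option.getD_some,
    Bool.not_false, Bool.and_eq_true, decide_eq_true_eq, and_true, true_and]
  constructor <;> linarith

/-- A busy period begun at `b` is over by any later type-2 event. -/
theorem busyEnd_le_of_isType2 {s : ℝ} {k : ℕ} {as : List ℝ}
    (hinc : as.Pairwise (· < ·)) {b c : ℝ} (hc : isType2 s k as c = true) (hbc : b < c) :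
    busyEnd s k as b ≤ c := by
  simp only [isType2, Bool.and_eq_true, decide_eq_true_eq, List.length_eq_zero_iff,
    List.filter_eq_nil_iff, not_le] at hc
  obtain ⟨u, hbu, huc, hu⟩ : ∃ u, b ≤ u ∧ u < c ∧ ∀ p ∈ jobsBefore s k as c, p.2 ≤ u := by
    have hdep := hc.2
    generalize jobsBefore s k as c = J at hdep
    induction J with
    | nil => exact ⟨b, le_rfl, hbc, by simp⟩
    | cons p J ih =>
      obtain ⟨u, hbu, huc, hu⟩ := ih fun q hq => hdep q (by simp [hq])
      refine ⟨max u p.2, le_max_of_le_left hbu, max_lt huc (hdep p (by simp)), ?_⟩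
      rintro q hq
      rcases List.mem_cons.1 hq with rfl | hq
      · exact le_max_right _ _
      · exact le_max_of_le_left (hu q hq)
  suffices hempty : xq s k as u = 0 from
    (csInf_le (s := {u : ℝ | b ≤ u ∧ xq s k as u = 0}) ⟨b, fun v hv => hv.1⟩
      ⟨hbu, hempty⟩).trans huc.le
  simp only [xq, List.length_eq_zero_iff, List.filter_eq_nil_iff, Bool.and_eq_true,
    decide_eq_true_eq, not_and, not_lt]
  intro p hp hpu
  unfold qsim at hp
  rw [← filter_lt_append_filter_ge hinc c, List.foldl_append] at hp
  rcases mem_foldl_qstep hp with hp | hp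
  · exact hu p hp
  · simp only [List.mem_filter, decide_eq_true_eq] at hp
    exact absurd (hp.2.trans hpu) (not_le.2 huc)

/-- The lossy busy periods preceded by a long idle period inject into type-1 events. -/
theorem numLossyBPLong_le_numType1 {s : ℝ} {k : ℕ} {as : List ℝ} (hs : 0 < s) (hk : 1 ≤ k)
    (hinc : as.Pairwise (· < ·)) (hpos : ∀ a ∈ as, 0 < a) :
    numLossyBPLong s k as ≤ numType1 s k as := by
  have key : ∀ b, ∃ a, (startsLossyBP s k as b && decide (s ≤ b - prevDep s k as b)) = true →
      a ∈ as ∧ isType1 s k as a = true ∧ isType2 s k as b = true ∧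
        b < a ∧ a < busyEnd s k as b := by
    intro b
    by_cases hb : (startsLossyBP s k as b && decide (s ≤ b - prevDep s k as b)) = true
    swap
    · exact ⟨0, fun h => absurd h hb⟩
    simp only [startsLossyBP, Bool.and_eq_true, decide_eq_true_eq, List.any_eq_true] at hb
    obtain ⟨⟨h2, a₀, ha₀, ⟨hl₀, hba₀⟩, hend⟩, hidle⟩ := hb
    have hne : b ≠ a₀ := by
      rintro rfl
      simp only [isLoss, isType2, Bool.and_eq_true, decide_eq_true_eq] at hl₀ h2
      omega
    obtain ⟨a, ha, hmin⟩ := Finset.exists_min_image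
      (as.filter fun a => isLoss s k as a && decide (b < a)).toFinset id
      ⟨a₀, by simp [ha₀, hl₀, lt_of_le_of_ne hba₀ hne]⟩
    simp only [List.mem_toFinset, List.mem_filter, Bool.and_eq_true, decide_eq_true_eq,
      id] at ha hmin
    refine ⟨a, fun _ => ⟨ha.1, ?_, h2, ha.2.2, ?_⟩⟩
    · exact isType1_of_first_loss hs hk hinc hpos h2 hidle ha.2.1 ha.2.2
        fun a' h₁ h₂ h₃ => hmin a' ⟨h₁, h₂, h₃⟩
    · exact (hmin a₀ ⟨ha₀, hl₀, lt_of_le_of_ne hba₀ hne⟩).trans_lt hend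
  choose f hf using key
  have hnodup : as.Nodup := hinc.imp ne_of_lt
  unfold numLossyBPLong numType1
  rw [← List.toFinset_card_of_nodup (hnodup.filter _),
    ← List.toFinset_card_of_nodup (hnodup.filter _)]
  refine Finset.card_le_card_of_injOn f (fun b hb => ?_) fun b hb c hc hbc => ?_
  · simp only [List.coe_toFinset, Set.mem_ofPred_eq, List.mem_filter] at hb ⊢
    exact ⟨(hf b hb.2).1, (hf b hb.2).2.1⟩
  · simp only [List.coe_toFinset, Set.mem_ofPred_eq, List.mem_filter] at hb hc
    obtain ⟨-, -, hb₂, hb₃, hb₄⟩ := hf b hb.2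
    obtain ⟨-, -, hc₂, hc₃, hc₄⟩ := hf c hc.2
    rcases lt_trichotomy b c with h | h | h
    · have := busyEnd_le_of_isType2 hinc hc₂ h
      linarith
    · exact h
    · have := busyEnd_le_of_isType2 hinc hb₂ h
      linarith

/-- if a type-2 event occurs at `τ` and the preceding idle period has
length at least `s`, then `ζ(t) = s` for every `t ≥ τ` up to the next loss, and
the first loss after `τ` is a type-1 event; consequently `N_ℓ ≤ N₁`. -/
theorem type2_event_with_long_idle (s tf : ℝ) (k : ℕ) (as : List ℝ)
    (hs : 0 < s) (hk : 1 ≤ k) (hinc : as.Chain' (· < ·))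
    (hrange : ∀ a ∈ as, 0 < a ∧ a < tf)
    (τ : ℝ) (h2 : isType2 s k as τ = true)
    (hidle : s ≤ τ - prevDep s k as τ) :
    (∀ t, τ ≤ t → (∀ a ∈ as, isLoss s k as a = true → ¬(τ < a ∧ a ≤ t)) →
      zetaAt s k as t = s) ∧
    (∀ a ∈ as, isLoss s k as a = true → τ < a →
      (∀ a' ∈ as, isLoss s k as a' = true → τ < a' → a ≤ a') →
      isType1 s k as a = true) ∧
    numLossyBPLong s k as ≤ numType1 s k as := by
  have hsort : as.Pairwise (· < ·) := List.isChain_iff_pairwise.1 hinc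
  have hpos : ∀ a ∈ as, 0 < a := fun a ha => (hrange a ha).1
  refine ⟨fun t ht hno => ?_, fun a _ hloss hτa hfirst => ?_, ?_⟩
  · have hτ : τ ∈ as := by
      simp only [isType2, Bool.and_eq_true, decide_eq_true_eq] at h2
      exact h2.1
    have hstate := state_of_long_idle hs hsort hpos h2 hidle (filter_le_isPrefix hsort t)
      (by simp [hτ, ht]) fun a ha hτa hla => by
        simp only [List.mem_filter, decide_eq_true_eq] at ha
        exact hno a ha.1 hla ⟨hτa, ha.2⟩
    unfold zetaAt
    rw [hstate]
  · exact isType1_of_first_loss hs hk hsort hpos h2 hidle hloss hτa hfirst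
  · exact numLossyBPLong_le_numType1 hs hk hsort hpos
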